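/- Let 𝔤 be a restricted Lie algebra over F of characteristic p > 0 and (φ, ω) ∈ C²_*(𝔤) a restricted 2-cocycle (d²_*(φ,ω) = 0). Define 𝔊 = 𝔤 ⊕ F·c with bracket [g + αc, h + βc]_𝔊 = [g,h]_𝔤 + φ(g ∧ h)c and p-operation (g + αc)^{[p]_𝔊} = g^{[p]_𝔤} + (ω(g) + appropriate term) c with c^{[p]} = 0 and c central. Then 𝔊 is a restricted Lie algebra, i.e., the bracket satisfies the Jacobi identity and the [p]-operation satisfies the three restricted Lie algebra axioms. -/

import Mathlib

open Finset Polynomial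

/-- The Heisenberg Lie bracket on `F^(2m+1)`: `[e_i, e_{m+i}] = e_{2m}` (0-indexed),
with `e_{2m}` (the last basis vector) playing the role of the central element `e_{2m+1}`. -/
def hBr (F : Type*) [Field F] (m : ℕ) (g h : Fin (2*m+1) → F) : Fin (2*m+1) → F :=
  Pi.single (Fin.last (2*m))
    (∑ i : Fin m,
      (g ⟨i.1, by have := i.2; omega⟩ * h ⟨m + i.1, by have := i.2; omega⟩
        - g ⟨m + i.1, by have := i.2; omega⟩ * h ⟨i.1, by have := i.2; omega⟩))

/-- The central basis vector `e_{2m+1}` of the Heisenberg algebra. -/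
def eC (F : Type*) [Field F] (m : ℕ) : Fin (2*m+1) → F := Pi.single (Fin.last (2*m)) 1

/-- Extension of a bilinear bracket on `F^n` to `(Polynomial F)^n` via structure constants. -/
noncomputable def brP (F : Type*) [Field F] (n : ℕ)
    (br : (Fin n → F) → (Fin n → F) → (Fin n → F))
    (x y : Fin n → Polynomial F) : Fin n → Polynomial F :=
  fun k => ∑ i : Fin n, ∑ j : Fin n,
    x i * y j * Polynomial.C (br (Pi.single i 1) (Pi.single j 1) k)

/-- `(ad (t g + h))^(p-1) (g)` computed with polynomial coefficients in `t`. -/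
noncomputable def adP (F : Type*) [Field F] (n p : ℕ)
    (br : (Fin n → F) → (Fin n → F) → (Fin n → F)) (g h : Fin n → F) :
    Fin n → Polynomial F :=
  (fun z => brP F n br ((Polynomial.X : Polynomial F) • (fun j => Polynomial.C (g j))
      + (fun j => Polynomial.C (h j))) z)^[p-1] (fun j => Polynomial.C (g j))

/-- The total correction term `Σ_{i=1}^{p-1} s_i(g,h)`, where `i·s_i(g,h)` is the coefficient
of `t^{i-1}` in `(ad (t g + h))^{p-1}(g)`. -/
noncomputable def sSum (F : Type*) [Field F] (n p : ℕ)
    (br : (Fin n → F) → (Fin n → F) → (Fin n → F)) (g h : Fin n → F) : Fin n → F :=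
  ∑ i ∈ Finset.range (p-1),
    (((i+1 : ℕ) : F))⁻¹ • (fun k => (adP F n p br g h k).coeff i)

/-- The three axioms of a `[p]`-operator on the Lie algebra `(F^n, br)`. -/
def IsPMap (F : Type*) [Field F] (n p : ℕ)
    (br : (Fin n → F) → (Fin n → F) → (Fin n → F))
    (pmap : (Fin n → F) → (Fin n → F)) : Prop :=
  (∀ (a : F) (g : Fin n → F), pmap (a • g) = a ^ p • pmap g) ∧
  (∀ g h, pmap (g + h) = pmap g + pmap h + sSum F n p br g h) ∧
  (∀ g h, br (pmap g) h = (fun x => br g x)^[p] h)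

/-- Bilinearity of a map `φ : F^n → F^n → F`. -/
def IsBil (F : Type*) [Field F] (n : ℕ) (φ : (Fin n → F) → (Fin n → F) → F) : Prop :=
  (∀ (a : F) (x y z : Fin n → F), φ (a • x + y) z = a * φ x z + φ y z) ∧
  (∀ (a : F) (x y z : Fin n → F), φ x (a • y + z) = a * φ x y + φ x z)

/-- Left-normed iterated bracket: `lnbSeq br s k = [s 0, s 1, …, s k]`. -/
def lnbSeq (F : Type*) [Field F] (n : ℕ)
    (br : (Fin n → F) → (Fin n → F) → (Fin n → F)) (s : ℕ → Fin n → F) :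
    ℕ → (Fin n → F)
  | 0 => s 0
  | (k+1) => br (lnbSeq F n br s k) (s (k+1))

/-- The sequence `g_1 = g, g_2 = h, g_{j+2} = g or h` according to `l j`. -/
def cseq (F : Type*) [Field F] (n : ℕ) (g h : Fin n → F) (l : ℕ → Bool) :
    ℕ → Fin n → F :=
  fun j => if j = 0 then g else if j = 1 then h else if l (j - 2) then g else h

/-- `φ`-compatibility of `ω : 𝔤 → F`: `ω(a g) = a^p ω(g)` and
`ω(g+h) = ω(g) + ω(h) + Σ (1/#(g)) φ([g_1,…,g_{p-1}] ∧ g_p)`, the sum over all sequences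
`g_i ∈ {g, h}` with `g_1 = g`, `g_2 = h`, where `#(g)` is the number of factors equal to `g`. -/
def Compat (F : Type*) [Field F] (n p : ℕ)
    (br : (Fin n → F) → (Fin n → F) → (Fin n → F))
    (φ : (Fin n → F) → (Fin n → F) → F) (ω : (Fin n → F) → F) : Prop :=
  (∀ (a : F) (g : Fin n → F), ω (a • g) = a ^ p * ω g) ∧
  (∀ g h, ω (g + h) = ω g + ω h +
    ∑ l : Fin (p-2) → Bool,
      (((1 + (Finset.univ.filter (fun i => l i = true)).card : ℕ) : F))⁻¹ *
        φ (lnbSeq F n br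
            (cseq F n g h (fun j => if hj : j < p-2 then l ⟨j, hj⟩ else false)) (p-2))
          (cseq F n g h (fun j => if hj : j < p-2 then l ⟨j, hj⟩ else false) (p-1)))

/-! Jacobson's sum `Σ sᵢ(g, h)` is the sum of the left-normed brackets `[g, h, g₃, …, g_p]` with
`gᵢ ∈ {g, h}`, weighted by `1 / #(g)`: expanding `(ad (tg + h))^(p-1) g` gives one such bracket
per choice of the `gᵢ`, times `t^(#(g)-1)` and the sign `(-1)^(p-1) = 1`. Over `𝔊` the last
coordinate of each bracket is `φ([g, …, g_{p-1}] ∧ g_p)`, so additivity of the `[p]`-operation is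
`φ`-compatibility of `ω`. The same sign turns `(ad g)^(p-1) h` into `[h, g, …, g]`, so the axiom
`ad (g^[p]) = (ad g)^p` has last coordinate `ind² = 0`. -/

theorem neg_one_pow_char_sub_one (R : Type*) [Ring R] (p : ℕ) [Fact p.Prime] [CharP R p] :
    (-1 : R) ^ (p - 1) = 1 := by
  have h := neg_one_pow_char R p
  rw [← pow_sub_one_mul (Fact.out : p.Prime).ne_zero] at h
  simpa using h

theorem exists_linearMap₂_eq {R U V W : Type*} [CommRing R] [AddCommGroup U] [Module R U]
    [AddCommGroup V] [Module R V] [AddCommGroup W] [Module R W] (f : U → V → W)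
    (hleft : ∀ (a : R) x y z, f (a • x + y) z = a • f x z + f y z)
    (hright : ∀ (a : R) x y z, f x (a • y + z) = a • f x y + f x z) :
    ∃ B : U →ₗ[R] V →ₗ[R] W, f = fun x y ↦ B x y := by
  have zero_left (z : V) : f 0 z = 0 := by simpa using hleft 1 0 0 z
  have zero_right (x : U) : f x 0 = 0 := by simpa using hright 1 x 0 0
  refine ⟨LinearMap.mk₂ R f (fun x y z ↦ ?_) (fun a x z ↦ ?_) (fun x y z ↦ ?_)
    (fun a x y ↦ ?_), rfl⟩
  · simpa using hleft 1 x y z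
  · simpa [zero_left] using hleft a x 0 z
  · simpa using hright 1 x y z
  · simpa [zero_right] using hright a x y 0

theorem pow_apply_eq_flip_of_isAlt {R M : Type*} [CommRing R] [AddCommGroup M] [Module R M]
    {B : M →ₗ[R] M →ₗ[R] M} (hB : B.IsAlt) (x y : M) (m : ℕ) :
    (B x ^ m) y = (-1 : R) ^ m • (B.flip x ^ m) y := by
  have ad_eq : B x = (-1 : R) • B.flip x := by
    ext z
    simp [hB.neg]
  rw [ad_eq, _root_.smul_pow, LinearMap.smul_apply]

section Words

variable {F : Type*} [Field F] {m n : ℕ}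

/-- The number of letters `true` in a Boolean word. -/
def countTrue (l : Fin m → Bool) : ℕ := (Finset.univ.filter (fun i => l i = true)).card

theorem countTrue_le (l : Fin m → Bool) : countTrue l ≤ m :=
  (Finset.card_filter_le _ _).trans_eq (by simp)

theorem countTrue_snoc (l : Fin m → Bool) (b : Bool) :
    countTrue (Fin.snoc l b : Fin (m + 1) → Bool) = countTrue l + if b then 1 else 0 := by
  simp only [countTrue, Finset.card_filter, Fin.sum_univ_castSucc, Fin.snoc_castSucc,
    Fin.snoc_last]

theorem sum_boolWord_succ {M : Type*} [AddCommMonoid M] (f : (Fin (m + 1) → Bool) → M) :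
    ∑ l, f l = ∑ l : Fin m → Bool, (f (Fin.snoc l true) + f (Fin.snoc l false)) := by
  rw [← (Fin.snocEquiv fun _ : Fin (m + 1) ↦ Bool).sum_comp, Fintype.sum_prod_type_right]
  exact Fintype.sum_congr _ _ fun l ↦ Fintype.sum_bool _

/-- The sequence `g₁ = g, g₂ = h, g₃, …` in which `l` chooses the entries `g₃, …, g_{m+2}` among
`g` (for `true`) and `h`. It is indexed from `0`; the entries past the end of `l` are `h`. -/
def wordSeq (g h : Fin n → F) (l : Fin m → Bool) : ℕ → Fin n → F :=
  cseq F n g h (fun j => if hj : j < m then l ⟨j, hj⟩ else false)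

theorem wordSeq_snoc_of_le (g h : Fin n → F) (l : Fin m → Bool) (b : Bool) {j : ℕ}
    (hj : j ≤ m + 1) :
    wordSeq g h (Fin.snoc l b : Fin (m + 1) → Bool) j = wordSeq g h l j := by
  rcases j with _ | _ | j
  · rfl
  · rfl
  · have hjm : j < m := by omega
    simp [wordSeq, cseq, hjm, hjm.trans m.lt_succ_self, Fin.snoc]

theorem wordSeq_snoc_last (g h : Fin n → F) (l : Fin m → Bool) (b : Bool) :
    wordSeq g h (Fin.snoc l b : Fin (m + 1) → Bool) (m + 2) = if b then g else h := by
  simp [wordSeq, cseq, Fin.snoc]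

theorem map_wordSeq {n' : ℕ} (f : (Fin n → F) → (Fin n' → F)) (g h : Fin n → F)
    (l : Fin m → Bool) (j : ℕ) : f (wordSeq g h l j) = wordSeq (f g) (f h) l j := by
  simp only [wordSeq, cseq, apply_ite f]

theorem lnbSeq_congr {br : (Fin n → F) → (Fin n → F) → (Fin n → F)} {s t : ℕ → Fin n → F}
    {k : ℕ} (h : ∀ j ≤ k, s j = t j) : lnbSeq F n br s k = lnbSeq F n br t k := by
  induction k with
  | zero => exact h 0 le_rfl
  | succ k ih => rw [lnbSeq, lnbSeq, ih fun j hj ↦ h j (hj.trans k.le_succ), h (k + 1) le_rfl]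

theorem map_lnbSeq {n' : ℕ} {br : (Fin n → F) → (Fin n → F) → (Fin n → F)}
    {br' : (Fin n' → F) → (Fin n' → F) → (Fin n' → F)} {f : (Fin n → F) → (Fin n' → F)}
    (hf : ∀ x y, f (br x y) = br' (f x) (f y)) (s : ℕ → Fin n → F) (k : ℕ) :
    f (lnbSeq F n br s k) = lnbSeq F n' br' (fun j ↦ f (s j)) k := by
  induction k with
  | zero => rfl
  | succ k ih => rw [lnbSeq, lnbSeq, hf, ih]

theorem lnbSeq_wordSeq_snoc (br : (Fin n → F) → (Fin n → F) → (Fin n → F)) (g h : Fin n → F)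
    (l : Fin m → Bool) (b : Bool) :
    lnbSeq F n br (wordSeq g h (Fin.snoc l b : Fin (m + 1) → Bool)) (m + 2) =
      br (lnbSeq F n br (wordSeq g h l) (m + 1)) (if b then g else h) := by
  rw [lnbSeq, wordSeq_snoc_last, lnbSeq_congr fun _ hj ↦ wordSeq_snoc_of_le g h l b hj]

end Words

section JacobsonSum

variable {F : Type*} [Field F] {n : ℕ}

/-- The vector `g ∈ Fⁿ` as a vector of constant polynomials, an argument for `brP`. -/
noncomputable def constVec (g : Fin n → F) : Fin n → F[X] := fun j ↦ C (g j)

/-- The bracket `brP` on `F[X]ⁿ` as a bilinear map over `F[X]`. It is bilinear for every function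
`br`, since only the values of `br` on basis vectors enter. -/
noncomputable def polyBracket (br : (Fin n → F) → (Fin n → F) → (Fin n → F)) :
    (Fin n → F[X]) →ₗ[F[X]] (Fin n → F[X]) →ₗ[F[X]] (Fin n → F[X]) :=
  LinearMap.mk₂ F[X] (brP F n br)
    (fun x y z ↦ by ext1 k; simp [brP, add_mul, Finset.sum_add_distrib])
    (fun a x z ↦ by ext1 k; simp [brP, mul_assoc, Finset.mul_sum])
    (fun x y z ↦ by ext1 k; simp [brP, add_mul, mul_add, Finset.sum_add_distrib])
    (fun a x z ↦ by ext1 k; simp [brP, mul_assoc, mul_left_comm, Finset.mul_sum])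

theorem bilin_apply_eq_sum {R ι κ : Type*} [CommRing R] [Fintype ι] [DecidableEq ι]
    (B : (ι → R) →ₗ[R] (ι → R) →ₗ[R] (κ → R)) (x y : ι → R) (k : κ) :
    B x y k = ∑ i, ∑ j, x i * y j * B (Pi.single i 1) (Pi.single j 1) k := by
  conv_lhs => rw [pi_eq_sum_univ' x, pi_eq_sum_univ' y]
  simp only [map_sum, map_smul, LinearMap.sum_apply, LinearMap.smul_apply, Finset.sum_apply,
    Pi.smul_apply, smul_eq_mul, Finset.mul_sum, mul_assoc]
  rw [Finset.sum_comm]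
  simp only [mul_left_comm]

variable (B : (Fin n → F) →ₗ[F] (Fin n → F) →ₗ[F] (Fin n → F))

theorem polyBracket_constVec (x y : Fin n → F) :
    polyBracket (fun x y ↦ B x y) (constVec x) (constVec y) = constVec (B x y) := by
  ext1 k
  simp [polyBracket, brP, constVec, bilin_apply_eq_sum B x y k]

variable {B}

theorem polyBracket_X_smul_add_constVec (hB : B.IsAlt) (g h w : Fin n → F) :
    polyBracket (fun x y ↦ B x y) ((X : F[X]) • constVec g + constVec h) (constVec w) =
      -((X : F[X]) • constVec (B w g) + constVec (B w h)) := by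
  have constVec_neg (v : Fin n → F) : constVec (-v) = -constVec v := by
    ext1 k
    simp [constVec]
  rw [map_add, map_smul, LinearMap.add_apply, LinearMap.smul_apply, polyBracket_constVec,
    polyBracket_constVec, ← hB.neg w g, ← hB.neg w h, constVec_neg, constVec_neg, smul_neg,
    neg_add]

theorem iterate_brP_constVec (hB : B.IsAlt) (g h : Fin n → F) (m : ℕ) :
    (brP F n (fun x y ↦ B x y) ((X : F[X]) • constVec g + constVec h))^[m + 1] (constVec g) =
      (-1 : F[X]) ^ (m + 1) • ∑ l : Fin m → Bool, (X : F[X]) ^ countTrue l •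
        constVec (lnbSeq F n (fun x y ↦ B x y) (wordSeq g h l) (m + 1)) := by
  induction m with
  | zero =>
    have constVec_zero : constVec (0 : Fin n → F) = 0 := by
      ext1 k
      simp [constVec]
    change polyBracket (fun x y ↦ B x y) _ _ = _
    rw [polyBracket_X_smul_add_constVec hB, hB.self_eq_zero, constVec_zero]
    simp [countTrue, lnbSeq, wordSeq, cseq]
  | succ m ih =>
    rw [Function.iterate_succ_apply', ih]
    change polyBracket (fun x y ↦ B x y) _ _ = _
    simp only [map_smul, map_sum, polyBracket_X_smul_add_constVec hB, sum_boolWord_succ,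
      lnbSeq_wordSeq_snoc, countTrue_snoc, if_true, Bool.false_eq_true, if_false, add_zero,
      pow_succ _ (m + 1), pow_succ _ (countTrue _), mul_smul, smul_neg, Finset.sum_neg_distrib,
      smul_add, neg_smul, one_smul]

theorem sSum_eq_sum_lnbSeq (hB : B.IsAlt) (p : ℕ) [Fact p.Prime] [CharP F p]
    (g h : Fin n → F) :
    sSum F n p (fun x y ↦ B x y) g h = ∑ l : Fin (p - 2) → Bool,
      (((1 + countTrue l : ℕ) : F))⁻¹ •
        lnbSeq F n (fun x y ↦ B x y) (wordSeq g h l) (p - 2 + 1) := by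
  have hp : p - 1 = p - 2 + 1 := by have := (Fact.out : p.Prime).two_le; omega
  have sign : (-1 : F[X]) ^ (p - 2 + 1) = 1 := hp ▸ neg_one_pow_char_sub_one F[X] p
  have adP_eq : adP F n p (fun x y ↦ B x y) g h = ∑ l : Fin (p - 2) → Bool,
      (X : F[X]) ^ countTrue l •
        constVec (lnbSeq F n (fun x y ↦ B x y) (wordSeq g h l) (p - 2 + 1)) := by
    rw [← one_smul F[X] (∑ l, _), ← sign, ← iterate_brP_constVec hB, ← hp]
    rfl
  have hmem (l : Fin (p - 2) → Bool) : countTrue l < p - 1 := by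
    have := countTrue_le l
    omega
  ext k
  simp only [sSum, adP_eq, constVec, Finset.sum_apply, Pi.smul_apply, smul_eq_mul,
    finsetSum_coeff, coeff_mul_C, coeff_X_pow, Finset.mul_sum, ite_mul, one_mul, zero_mul,
    mul_ite, mul_zero]
  rw [Finset.sum_comm]
  simp [hmem, add_comm]

end JacobsonSum

section CentralExtension

variable {F : Type*} [Field F] {n : ℕ}

theorem eq_of_init_eq_of_last_eq {α : Type*} {x y : Fin (n + 1) → α}
    (hinit : (Fin.init x : Fin n → α) = Fin.init y) (hlast : x (Fin.last n) = y (Fin.last n)) :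
    x = y := by
  rw [← Fin.snoc_init_self x, ← Fin.snoc_init_self y, hinit, hlast]

theorem init_add {α : Type*} [Add α] (x y : Fin (n + 1) → α) :
    (Fin.init (x + y) : Fin n → α) = Fin.init x + Fin.init y :=
  rfl

theorem init_smul {R α : Type*} [SMul R α] (a : R) (x : Fin (n + 1) → α) :
    (Fin.init (a • x) : Fin n → α) = a • Fin.init x :=
  rfl

/-- The bracket `[g + αc, h + βc] = [g, h] + φ(g, h)c` of the central extension of `(Fⁿ, B)` by
`φ`; the last coordinate is the coefficient of `c`. -/
def centralBracket (B : (Fin n → F) →ₗ[F] (Fin n → F) →ₗ[F] (Fin n → F))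
    (φ : (Fin n → F) →ₗ[F] (Fin n → F) →ₗ[F] F) :
    (Fin (n + 1) → F) →ₗ[F] (Fin (n + 1) → F) →ₗ[F] (Fin (n + 1) → F) :=
  LinearMap.mk₂ F
    (fun x y ↦ Fin.snoc (B (Fin.init x) (Fin.init y)) (φ (Fin.init x) (Fin.init y)))
    (fun x y z ↦ by apply eq_of_init_eq_of_last_eq <;> simp [init_add])
    (fun a x z ↦ by apply eq_of_init_eq_of_last_eq <;> simp [init_smul])
    (fun x y z ↦ by apply eq_of_init_eq_of_last_eq <;> simp [init_add])
    (fun a x z ↦ by apply eq_of_init_eq_of_last_eq <;> simp [init_smul])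

/-- The operation `(g + αc)^{[p]} = g^{[p]} + ω(g)c` on the central extension. -/
def centralPMap (pmap : (Fin n → F) → (Fin n → F)) (ω : (Fin n → F) → F)
    (x : Fin (n + 1) → F) : Fin (n + 1) → F :=
  Fin.snoc (pmap (Fin.init x)) (ω (Fin.init x))

variable {B : (Fin n → F) →ₗ[F] (Fin n → F) →ₗ[F] (Fin n → F)}
  {φ : (Fin n → F) →ₗ[F] (Fin n → F) →ₗ[F] F}

theorem init_centralBracket (x y : Fin (n + 1) → F) :
    Fin.init (centralBracket B φ x y) = B (Fin.init x) (Fin.init y) :=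
  Fin.init_snoc (α := fun _ ↦ F) _ _

theorem centralBracket_last (x y : Fin (n + 1) → F) :
    centralBracket B φ x y (Fin.last n) = φ (Fin.init x) (Fin.init y) :=
  Fin.snoc_last (α := fun _ ↦ F) _ _

theorem centralBracket_isAlt (hB : B.IsAlt) (hφ : φ.IsAlt) : (centralBracket B φ).IsAlt :=
  fun x ↦ eq_of_init_eq_of_last_eq
    ((init_centralBracket x x).trans (hB _)) ((centralBracket_last x x).trans (hφ _))

theorem centralBracket_jacobi (hB : B.IsAlt)
    (hjac : ∀ g h f, B (B g h) f + B (B h f) g + B (B f g) h = 0)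
    (hco : ∀ g h f, φ (B g h) f - φ (B g f) h + φ (B h f) g = 0) (x y z : Fin (n + 1) → F) :
    centralBracket B φ (centralBracket B φ x y) z + centralBracket B φ (centralBracket B φ y z) x +
      centralBracket B φ (centralBracket B φ z x) y = 0 := by
  apply eq_of_init_eq_of_last_eq
  · simp only [init_add, init_centralBracket, hjac]
    rfl
  · simp only [Pi.add_apply, Pi.zero_apply, centralBracket_last, init_centralBracket]
    rw [← hB.neg (Fin.init x) (Fin.init z), map_neg, LinearMap.neg_apply]
    linear_combination hco (Fin.init x) (Fin.init y) (Fin.init z)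

theorem init_lnbSeq_centralBracket {m : ℕ} (g h : Fin (n + 1) → F) (l : Fin m → Bool) (k : ℕ) :
    Fin.init (lnbSeq F (n + 1) (fun x y ↦ centralBracket B φ x y) (wordSeq g h l) k) =
      lnbSeq F n (fun x y ↦ B x y) (wordSeq (Fin.init g) (Fin.init h) l) k := by
  rw [map_lnbSeq (f := Fin.init) (br' := fun x y ↦ B x y) init_centralBracket]
  exact lnbSeq_congr fun j _ ↦ map_wordSeq Fin.init g h l j

theorem init_sSum_centralBracket (p : ℕ) [Fact p.Prime] [CharP F p] (hB : B.IsAlt)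
    (hφ : φ.IsAlt) (g h : Fin (n + 1) → F) :
    Fin.init (sSum F (n + 1) p (fun x y ↦ centralBracket B φ x y) g h) =
      sSum F n p (fun x y ↦ B x y) (Fin.init g) (Fin.init h) := by
  rw [sSum_eq_sum_lnbSeq (centralBracket_isAlt hB hφ), sSum_eq_sum_lnbSeq hB]
  have init_sum {ι : Type} (s : Finset ι) (f : ι → Fin (n + 1) → F) :
      Fin.init (∑ i ∈ s, f i) = ∑ i ∈ s, (Fin.init (f i) : Fin n → F) :=
    map_sum (LinearMap.funLeft F F Fin.castSucc) f s
  simp only [init_sum, init_smul, init_lnbSeq_centralBracket]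

theorem sSum_centralBracket_last (p : ℕ) [Fact p.Prime] [CharP F p] (hB : B.IsAlt)
    (hφ : φ.IsAlt) (g h : Fin (n + 1) → F) :
    sSum F (n + 1) p (fun x y ↦ centralBracket B φ x y) g h (Fin.last n) =
      ∑ l : Fin (p - 2) → Bool, (((1 + countTrue l : ℕ) : F))⁻¹ *
        φ (lnbSeq F n (fun x y ↦ B x y) (wordSeq (Fin.init g) (Fin.init h) l) (p - 2))
          (wordSeq (Fin.init g) (Fin.init h) l (p - 1)) := by
  have hp : p - 1 = p - 2 + 1 := by have := (Fact.out : p.Prime).two_le; omega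
  rw [sSum_eq_sum_lnbSeq (centralBracket_isAlt hB hφ), hp]
  simp only [Finset.sum_apply, Pi.smul_apply, smul_eq_mul, lnbSeq, centralBracket_last,
    init_lnbSeq_centralBracket, map_wordSeq (Fin.init : (Fin (n + 1) → F) → Fin n → F)]

theorem centralPMap_smul {p : ℕ} {pmap : (Fin n → F) → (Fin n → F)} {ω : (Fin n → F) → F}
    (hpmap : ∀ (a : F) g, pmap (a • g) = a ^ p • pmap g)
    (hω : ∀ (a : F) g, ω (a • g) = a ^ p * ω g) (a : F) (x : Fin (n + 1) → F) :
    centralPMap pmap ω (a • x) = a ^ p • centralPMap pmap ω x := by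
  apply eq_of_init_eq_of_last_eq <;> simp [centralPMap, init_smul, hpmap, hω]

theorem centralPMap_add {p : ℕ} [Fact p.Prime] [CharP F p] {pmap : (Fin n → F) → (Fin n → F)}
    {ω : (Fin n → F) → F} (hB : B.IsAlt) (hφ : φ.IsAlt)
    (hpmap : ∀ g h, pmap (g + h) = pmap g + pmap h + sSum F n p (fun x y ↦ B x y) g h)
    (hω : ∀ g h, ω (g + h) = ω g + ω h + ∑ l : Fin (p - 2) → Bool,
      (((1 + countTrue l : ℕ) : F))⁻¹ * φ (lnbSeq F n (fun x y ↦ B x y) (wordSeq g h l) (p - 2))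
        (wordSeq g h l (p - 1))) (x y : Fin (n + 1) → F) :
    centralPMap pmap ω (x + y) = centralPMap pmap ω x + centralPMap pmap ω y +
      sSum F (n + 1) p (fun x y ↦ centralBracket B φ x y) x y := by
  apply eq_of_init_eq_of_last_eq
  · simp only [centralPMap, init_add, Fin.init_snoc, hpmap, init_sSum_centralBracket p hB hφ]
  · simp only [centralPMap, init_add, Fin.snoc_last, Pi.add_apply,
      sSum_centralBracket_last p hB hφ]
    exact hω (Fin.init x) (Fin.init y)

theorem centralBracket_centralPMap_left {p : ℕ} [Fact p.Prime] [CharP F p]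
    {pmap : (Fin n → F) → (Fin n → F)} (ω : (Fin n → F) → F) (hB : B.IsAlt) (hφ : φ.IsAlt)
    (hpmap : ∀ g h, B (pmap g) h = (B g)^[p] h)
    (hind : ∀ g h, φ g (pmap h) - φ ((B.flip h)^[p - 1] g) h = 0)
    (x y : Fin (n + 1) → F) :
    centralBracket B φ (centralPMap pmap ω x) y = (centralBracket B φ x)^[p] y := by
  have init_iterate (m : ℕ) :
      Fin.init ((centralBracket B φ x)^[m] y) = (B (Fin.init x))^[m] (Fin.init y) :=
    Function.Semiconj.iterate_right (f := (Fin.init : (Fin (n + 1) → F) → Fin n → F))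
      (init_centralBracket x) m y
  have iterate_eq_flip :
      (B (Fin.init x))^[p - 1] (Fin.init y) = (B.flip (Fin.init x))^[p - 1] (Fin.init y) := by
    rw [← Module.End.pow_apply, ← Module.End.pow_apply, pow_apply_eq_flip_of_isAlt hB,
      neg_one_pow_char_sub_one, one_smul]
  apply eq_of_init_eq_of_last_eq
  · rw [init_centralBracket, init_iterate, centralPMap, Fin.init_snoc, hpmap]
  · have hp : p = p - 1 + 1 := (Nat.sub_add_cancel (Fact.out : p.Prime).one_le).symm
    calc centralBracket B φ (centralPMap pmap ω x) y (Fin.last n)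
        = φ (pmap (Fin.init x)) (Fin.init y) := by
          rw [centralBracket_last, centralPMap, Fin.init_snoc]
      _ = -φ (Fin.init y) (pmap (Fin.init x)) := (hφ.neg _ _).symm
      _ = -φ ((B.flip (Fin.init x))^[p - 1] (Fin.init y)) (Fin.init x) :=
          congrArg _ (sub_eq_zero.mp (hind (Fin.init y) (Fin.init x)))
      _ = φ (Fin.init x) ((B (Fin.init x))^[p - 1] (Fin.init y)) := by
          rw [hφ.neg, iterate_eq_flip]
      _ = (centralBracket B φ x)^[p] y (Fin.last n) := by
          rw [hp, Function.iterate_succ_apply', centralBracket_last, init_iterate,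
            Nat.add_sub_cancel]

end CentralExtension

/-- if `(φ, ω)` is a restricted 2-cocycle of a restricted Lie algebra `𝔤`, the
one-dimensional central extension `𝔊 = 𝔤 ⊕ F·c` with `[g+αc, h+βc] = [g,h] + φ(g∧h)c`,
`(g+αc)^{[p]} = g^{[p]} + ω(g)c`, `c` central and `c^{[p]} = 0, is a restricted Lie algebra. -/
theorem restricted_central_extension (F : Type*) [Field F] (n p : ℕ) [Fact p.Prime]
    [CharP F p]
    (br : (Fin n → F) → (Fin n → F) → (Fin n → F))
    (hbil : ∀ (a : F) (x y z : Fin n → F),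
      br (a • x + y) z = a • br x z + br y z ∧ br z (a • x + y) = a • br z x + br z y)
    (halt : ∀ g, br g g = 0)
    (hjac : ∀ g h f, br (br g h) f + br (br h f) g + br (br f g) h = 0)
    (pmap : (Fin n → F) → (Fin n → F))
    (hres : IsPMap F n p br pmap)
    (φ : (Fin n → F) → (Fin n → F) → F)
    (hφbil : IsBil F n φ) (hφalt : ∀ g, φ g g = 0)
    (ω : (Fin n → F) → F)
    (hcomp : Compat F n p br φ ω)
    (hco : ∀ g h f, φ (br g h) f - φ (br g f) h + φ (br h f) g = 0)
    (hind : ∀ g h, φ g (pmap h) - φ ((fun z => br z h)^[p-1] g) h = 0) :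
    let brG : (Fin (n+1) → F) → (Fin (n+1) → F) → (Fin (n+1) → F) :=
      fun x y => Fin.snoc (br (Fin.init x) (Fin.init y)) (φ (Fin.init x) (Fin.init y));
    let pmapG : (Fin (n+1) → F) → (Fin (n+1) → F) :=
      fun x => Fin.snoc (pmap (Fin.init x)) (ω (Fin.init x));
    (∀ (a : F) (x y z : Fin (n+1) → F),
      brG (a • x + y) z = a • brG x z + brG y z ∧ brG z (a • x + y) = a • brG z x + brG z y) ∧
    (∀ x, brG x x = 0) ∧
    (∀ x y z, brG (brG x y) z + brG (brG y z) x + brG (brG z x) y = 0) ∧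
    IsPMap F (n+1) p brG pmapG := by
  intro brG pmapG
  obtain ⟨B, rfl⟩ := exists_linearMap₂_eq br (fun a x y z ↦ (hbil a x y z).1)
    (fun a x y z ↦ (hbil a y z x).2)
  obtain ⟨Φ, rfl⟩ := exists_linearMap₂_eq φ hφbil.1 hφbil.2
  obtain ⟨hsmul, hadd, had⟩ := hres
  refine ⟨fun a x y z ↦ ⟨?_, ?_⟩, centralBracket_isAlt halt hφalt,
    centralBracket_jacobi halt hjac hco, centralPMap_smul hsmul hcomp.1,
    centralPMap_add halt hφalt hadd hcomp.2, centralBracket_centralPMap_left ω halt hφalt had hind⟩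
  · change centralBracket B Φ (a • x + y) z = _
    rw [map_add, map_smul]
    rfl
  · change centralBracket B Φ z (a • x + y) = _
    rw [map_add, map_smul]
    rfl
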